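/- arXiv:1810.05985 — 7 statements merged into one kernel-verified Lean document; each statement's English description precedes it below -/
import Mathlib

section
/- Let S be a subset of ℤⁿ, let H be the subgroup of ℤⁿ generated by S, and for an additive homomorphism χ : H →+ ℤ define σ_χ^⊥ := { m ∈ ℝⁿ | for all s ∈ S, ⟨m, s⟩ = χ(s) }. For two homomorphisms χ, χ' : H →+ ℤ, the subsets σ_χ^⊥ + ℤⁿ and σ_{χ'}^⊥ + ℤⁿ of ℝⁿ are equal (equivalently, σ_χ^⊥ and σ_{χ'}^⊥ have the same image in the torus ℝⁿ/ℤⁿ) if and only if there exists m ∈ ℤⁿ such that χ(s) − χ'(s) = ⟨m, s⟩ for all s ∈ H. In particular, the translate p(σ_χ^⊥) of the torus depends only on the image of χ in the cokernel of the restriction map Hom(ℤⁿ, ℤ) → Hom(H, ℤ). -/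
/-- The affine subspace `σ_χ^⊥ = { m ∈ ℝⁿ | ⟨m, s⟩ = χ(s) for all s ∈ S }` attached to a
subset `S ⊆ ℤⁿ` and an additive homomorphism `χ` on the subgroup generated by `S`. -/
def perpSet (n : ℕ) (S : Set (Fin n → ℤ))
    (χ : ↥(AddSubgroup.closure S) →+ ℤ) : Set (Fin n → ℝ) :=
  {m | ∀ (s : Fin n → ℤ) (hs : s ∈ S),
    ∑ i, m i * (s i : ℝ) = (χ ⟨s, AddSubgroup.subset_closure hs⟩ : ℝ)}

/-- The saturation of a subset of `ℝⁿ` under translation by the lattice `ℤⁿ`; two subsets have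
the same image in the torus `ℝⁿ/ℤⁿ` iff their saturations agree. -/
def plusLattice (n : ℕ) (A : Set (Fin n → ℝ)) : Set (Fin n → ℝ) :=
  {x | ∃ m ∈ A, ∃ z : Fin n → ℤ, x = m + fun i => (z i : ℝ)}

/-!
Elements of `σ_χ^⊥` are the homomorphisms `ℤⁿ → ℝ` extending `χ : H → ℤ ⊆ ℝ`. They exist because `ℝ`
is divisible, hence injective as an abelian group. If `b ∈ σ_{χ'}^⊥` and `z ∈ ℤⁿ`, then `b + z`
extends `χ' + ⟨z, ·⟩`; so a single lattice translate of a point of `σ_{χ'}^⊥` lying in `σ_χ^⊥`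
forces `χ - χ' = ⟨z, ·⟩`, and then `σ_χ^⊥ = σ_{χ'}^⊥ + z`.
-/

theorem exists_eq_sum_zsmul_of_divisibleBy {ι A : Type*} [Fintype ι] [AddCommGroup A]
    [DivisibleBy A ℤ] (H : AddSubgroup (ι → ℤ)) (f : H →+ A) :
    ∃ v : ι → A, ∀ s : H, f s = ∑ i, (s : ι → ℤ) i • v i := by
  classical
  obtain ⟨g, hg⟩ := Module.Baer.extension_property_addMonoidHom (Module.Baer.of_divisible A)
    H.subtype H.subtype_injective f
  refine ⟨fun i => g fun j => if i = j then 1 else 0, fun s => ?_⟩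
  calc
    f s = g s := (DFunLike.congr_fun hg s).symm
    _ = _ := g.toIntLinearMap.pi_apply_eq_sum_univ s

theorem sub_eq_sum_neg_mul_iff {ι R : Type*} [Fintype ι] [NonUnitalNonAssocRing R] {a b : R}
    {m s : ι → R} : b - a = ∑ i, (-m) i * s i ↔ a - b = ∑ i, m i * s i := by
  simp only [Pi.neg_apply, neg_mul, Finset.sum_neg_distrib]
  rw [← neg_sub, neg_inj]

theorem plusLattice_subset_plusLattice_iff {n : ℕ} {A B : Set (Fin n → ℝ)} :
    plusLattice n A ⊆ plusLattice n B ↔ A ⊆ plusLattice n B := by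
  constructor
  · exact fun hAB a ha => hAB ⟨a, ha, 0, by ext; simp⟩
  · rintro hAB _ ⟨a, ha, z, rfl⟩
    obtain ⟨b, hb, w, rfl⟩ := hAB ha
    exact ⟨b, hb, w + z, by ext; simp [add_assoc]⟩

section PerpSet

variable {n : ℕ} {S : Set (Fin n → ℤ)} {χ χ' : AddSubgroup.closure S →+ ℤ}

theorem mem_perpSet_iff_forall_closure {v : Fin n → ℝ} :
    v ∈ perpSet n S χ ↔
      ∀ s : AddSubgroup.closure S, ∑ i, v i * ((s : Fin n → ℤ) i : ℝ) = χ s := by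
  refine ⟨fun hv => ?_, fun hv s hs => hv ⟨s, AddSubgroup.subset_closure hs⟩⟩
  let pairing : AddSubgroup.closure S →+ ℝ :=
    (Fintype.linearCombination ℤ v).toAddMonoidHom.comp (AddSubgroup.closure S).subtype
  have pairing_apply (s : AddSubgroup.closure S) :
      pairing s = ∑ i, v i * ((s : Fin n → ℤ) i : ℝ) := by
    simp [pairing, Fintype.linearCombination_apply, mul_comm]
  have pairing_eq : pairing = (Int.castAddHom ℝ).comp χ :=
    AddMonoidHom.eq_of_eqOn_dense AddSubgroup.closure_closure_coe_preimage
      fun s hs => (pairing_apply s).trans (hv s hs)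
  exact fun s => (pairing_apply s).symm.trans (DFunLike.congr_fun pairing_eq s)

theorem perpSet_nonempty (χ : AddSubgroup.closure S →+ ℤ) : (perpSet n S χ).Nonempty := by
  obtain ⟨v, hv⟩ := exists_eq_sum_zsmul_of_divisibleBy _ ((Int.castAddHom ℝ).comp χ)
  refine ⟨v, mem_perpSet_iff_forall_closure.2 fun s => ?_⟩
  simpa [mul_comm] using (hv s).symm

theorem add_intCast_mem_perpSet_iff {v : Fin n → ℝ} (hv : v ∈ perpSet n S χ')
    (z : Fin n → ℤ) :
    (v + fun i => (z i : ℝ)) ∈ perpSet n S χ ↔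
      ∀ s : AddSubgroup.closure S, χ s - χ' s = ∑ i, z i * (s : Fin n → ℤ) i := by
  rw [mem_perpSet_iff_forall_closure] at hv ⊢
  refine forall_congr' fun s => ?_
  simp only [Pi.add_apply, add_mul, Finset.sum_add_distrib, hv s]
  rw [eq_comm, ← sub_eq_iff_eq_add']
  norm_cast

theorem plusLattice_perpSet_subset_iff :
    plusLattice n (perpSet n S χ) ⊆ plusLattice n (perpSet n S χ') ↔
      ∃ m : Fin n → ℤ, ∀ s : AddSubgroup.closure S,
        χ s - χ' s = ∑ i, m i * (s : Fin n → ℤ) i := by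
  rw [plusLattice_subset_plusLattice_iff]
  constructor
  · intro hsub
    obtain ⟨a, ha⟩ := perpSet_nonempty χ
    obtain ⟨b, hb, z, rfl⟩ := hsub ha
    exact ⟨z, (add_intCast_mem_perpSet_iff hb z).1 ha⟩
  · rintro ⟨m, hm⟩ a ha
    have translate_mem : (a + fun i => (((-m) i : ℤ) : ℝ)) ∈ perpSet n S χ' :=
      (add_intCast_mem_perpSet_iff ha (-m)).2 fun s => sub_eq_sum_neg_mul_iff.2 (hm s)
    exact ⟨_, translate_mem, m, by ext; simp⟩

end PerpSet

/-- `σ_χ^⊥` and `σ_{χ'}^⊥` have the same image in the torus `ℝⁿ/ℤⁿ` iff `χ − χ'` is the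
restriction to `H` of a homomorphism `⟨m, ·⟩` with `m ∈ ℤⁿ`. -/
theorem stmt_1 (n : ℕ) (S : Set (Fin n → ℤ))
    (χ χ' : ↥(AddSubgroup.closure S) →+ ℤ) :
    plusLattice n (perpSet n S χ) = plusLattice n (perpSet n S χ') ↔
      ∃ m : Fin n → ℤ, ∀ s : ↥(AddSubgroup.closure S),
        χ s - χ' s = ∑ i, m i * (s : Fin n → ℤ) i := by
  constructor
  · exact fun heq => plusLattice_perpSet_subset_iff.1 heq.subset
  · rintro ⟨m, hm⟩
    exact Set.Subset.antisymm (plusLattice_perpSet_subset_iff.2 ⟨m, hm⟩)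
      (plusLattice_perpSet_subset_iff.2 ⟨-m, fun s => sub_eq_sum_neg_mul_iff.2 (hm s)⟩)
end

section
/- Let H be a subgroup of ℤⁿ. Then the cokernel of the restriction homomorphism Hom(ℤⁿ, ℤ) →+ Hom(H, ℤ), φ ↦ φ|_H, is a finite group, and its cardinality equals the index of H in its saturation H̄ := { x ∈ ℤⁿ | q • x ∈ H for some positive integer q }. -/
/-- The saturation `H̄ = { x ∈ ℤⁿ | q • x ∈ H for some positive integer q }` of a subgroup
`H ≤ ℤⁿ`. -/
def saturationSubgroup (n : ℕ) (H : AddSubgroup (Fin n → ℤ)) :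
    AddSubgroup (Fin n → ℤ) where
  carrier := {x | ∃ q : ℕ, 0 < q ∧ q • x ∈ H}
  zero_mem' := ⟨1, one_pos, by simpa using H.zero_mem⟩
  add_mem' := by
    rintro a b ⟨q, hq, ha⟩ ⟨r, hr, hb⟩
    refine ⟨q * r, Nat.mul_pos hq hr, ?_⟩
    rw [smul_add]
    exact H.add_mem
      (by rw [mul_comm, mul_smul]; exact AddSubgroup.nsmul_mem H ha r)
      (by rw [mul_smul]; exact AddSubgroup.nsmul_mem H hb q)
  neg_mem' := by
    rintro a ⟨q, hq, ha⟩
    exact ⟨q, hq, by simpa [smul_neg] using H.neg_mem ha⟩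

/-- The restriction homomorphism `Hom(ℤⁿ, ℤ) →+ Hom(H, ℤ)`, `φ ↦ φ|_H`. -/
def resHom (n : ℕ) (H : AddSubgroup (Fin n → ℤ)) :
    ((Fin n → ℤ) →+ ℤ) →+ (↥H →+ ℤ) where
  toFun φ := φ.comp H.subtype
  map_zero' := rfl
  map_add' _ _ := rfl

/-!
In a Smith normal form the inclusion `N → M` is diagonal with entries `aᵢ`, and so is its transpose,
the restriction `M* → N*`. Hence the cokernel of restriction is `∏ R ⧸ (aᵢ)`. The saturation of `N`
is the span of those basis vectors of `M` which have a multiple in the basis of `N`, so its quotient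
by `N` is the same product.
-/

open Module Submodule
open scoped nonZeroDivisors

section Quotient

variable {R P ι : Type*} [CommRing R] [AddCommGroup P] [Module R P]

/-- The coordinatewise reduction `P ⧸ Q ≃ ∏ R ⧸ (aᵢ)` when `Q` consists of the elements whose
`i`-th coordinate is divisible by `aᵢ`. The coordinates `c` may have a kernel. -/
noncomputable def quotientEquivPiQuotientSpan (c : P →ₗ[R] ι → R) (hc : Function.Surjective c)
    (a : ι → R) (Q : Submodule R P) (hQ : ∀ x, x ∈ Q ↔ ∀ i, a i ∣ c x i) :
    (P ⧸ Q) ≃ₗ[R] ∀ i, R ⧸ Ideal.span {a i} :=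
  let reduction : P →ₗ[R] ∀ i, R ⧸ Ideal.span {a i} :=
    LinearMap.pi fun i => (Ideal.span {a i}).mkQ ∘ₗ LinearMap.proj i ∘ₗ c
  have ker_reduction : Q = LinearMap.ker reduction := by
    ext x
    simp [reduction, hQ, funext_iff, Ideal.Quotient.eq_zero_iff_dvd]
  have reduction_surjective : Function.Surjective reduction := fun v => by
    choose w hw using fun i => mkQ_surjective _ (v i)
    obtain ⟨x, rfl⟩ := hc w
    exact ⟨x, funext hw⟩
  (quotEquivOfEq _ _ ker_reduction).trans
    (reduction.quotKerEquivOfSurjective reduction_surjective)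

end Quotient

section Saturation

variable {R M : Type*} [CommRing R] [AddCommGroup M] [Module R M]

/-- The saturation of a submodule `N`: the elements of `M` that become torsion in `M ⧸ N`. -/
def saturation (N : Submodule R M) : Submodule R M :=
  (torsion R (M ⧸ N)).comap N.mkQ

theorem mem_saturation_iff {N : Submodule R M} {x : M} :
    x ∈ saturation N ↔ ∃ r ∈ R⁰, r • x ∈ N := by
  simp [saturation, Submonoid.smul_def, ← Quotient.mk_smul]

end Saturation

section SmithNormalForm

variable {R M ι : Type*} [CommRing R] [AddCommGroup M] [Module R M] {N : Submodule R M} {n : ℕ}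
  (S : Basis.SmithNormalForm N ι n)

theorem smithNormalForm_diag_mem_nonZeroDivisors (i : Fin n) : S.a i ∈ R⁰ := by
  refine mem_nonZeroDivisors_iff_right.mpr fun r hr => ?_
  have smul_bN_eq_zero : r • S.bN i = 0 := Subtype.ext <| by
    simp [S.snf, smul_smul, hr]
  simpa using congrArg (S.bN.repr · i) smul_bN_eq_zero

theorem mem_range_dualMap_subtype_iff_dvd (g : Dual R N) :
    g ∈ LinearMap.range N.subtype.dualMap ↔ ∀ i, S.a i ∣ g (S.bN i) := by
  constructor
  · rintro ⟨φ, rfl⟩ i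
    simp [S.snf]
  · intro hdvd
    choose c hc using hdvd
    refine ⟨S.bM.constr R (Function.extend S.f c 0), S.bN.ext fun i => ?_⟩
    simp [S.snf, hc, S.f.injective.extend_apply]

theorem mem_iff_dvd_repr_and_repr_eq_zero (x : M) :
    x ∈ N ↔ (∀ i, S.a i ∣ S.bM.repr x (S.f i)) ∧ ∀ j ∉ Set.range S.f, S.bM.repr x j = 0 := by
  constructor
  · intro hx
    refine ⟨fun i => ?_, fun j hj => S.repr_eq_zero_of_notMem_range ⟨x, hx⟩ hj⟩
    rw [S.repr_apply_embedding_eq_repr_smul ⟨x, hx⟩, map_smul, Finsupp.smul_apply, smul_eq_mul]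
    exact dvd_mul_right _ _
  · rintro ⟨hdvd, hzero⟩
    choose c hc using hdvd
    let y : N := S.bN.equivFun.symm c
    suffices x = y from this ▸ y.2
    refine S.bM.ext_elem fun j => ?_
    by_cases hj : j ∈ Set.range S.f
    · obtain ⟨i, rfl⟩ := hj
      rw [hc, S.repr_apply_embedding_eq_repr_smul, map_smul, Finsupp.smul_apply, smul_eq_mul,
        ← S.bN.equivFun_apply, LinearEquiv.apply_symm_apply]
    · rw [hzero j hj, S.repr_eq_zero_of_notMem_range y hj]

theorem mem_saturation_iff_repr_eq_zero (x : M) :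
    x ∈ saturation N ↔ ∀ j ∉ Set.range S.f, S.bM.repr x j = 0 := by
  rw [mem_saturation_iff]
  constructor
  · rintro ⟨r, hr, hrx⟩ j hj
    have repr_smul_eq_zero := ((mem_iff_dvd_repr_and_repr_eq_zero S _).mp hrx).2 j hj
    rw [map_smul, Finsupp.smul_apply, smul_eq_mul] at repr_smul_eq_zero
    exact (mem_nonZeroDivisors_iff.mp hr).1 _ repr_smul_eq_zero
  · intro hx
    refine ⟨∏ i, S.a i, prod_mem fun i _ => smithNormalForm_diag_mem_nonZeroDivisors S i,
      (mem_iff_dvd_repr_and_repr_eq_zero S _).mpr ⟨fun i => ?_, fun j hj => ?_⟩⟩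
    · simpa using (Finset.dvd_prod_of_mem S.a (Finset.mem_univ i)).mul_right _
    · simp [hx j hj]

/-- The coordinates of an element of the saturation along the basis vectors of `M` that have a
multiple in the basis of `N`. -/
noncomputable def saturationCoord : saturation N →ₗ[R] Fin n → R :=
  LinearMap.pi fun i => S.bM.coord (S.f i) ∘ₗ (saturation N).subtype

theorem saturationCoord_surjective : Function.Surjective (saturationCoord S) := by
  intro v
  let w : ι →₀ R := (Finsupp.equivFunOnFinite.symm v).embDomain S.f
  let x : M := S.bM.repr.symm w
  have repr_x : S.bM.repr x = w := S.bM.repr.apply_symm_apply w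
  have hx : x ∈ saturation N := (mem_saturation_iff_repr_eq_zero S x).mpr fun j hj => by
    rw [repr_x, Finsupp.embDomain_of_notMem_range _ _ j hj]
  refine ⟨⟨x, hx⟩, funext fun i => ?_⟩
  simp [saturationCoord, repr_x, w]

/-- The cokernel of the restriction `M* → N*` in terms of a Smith normal form of `N`. -/
noncomputable def dualCokernelEquivPiQuotientSpan :
    (Dual R N ⧸ LinearMap.range N.subtype.dualMap) ≃ₗ[R] ∀ i, R ⧸ Ideal.span {S.a i} :=
  quotientEquivPiQuotientSpan (S.bN.constr R).symm.toLinearMap (S.bN.constr R).symm.surjective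
    S.a _ (mem_range_dualMap_subtype_iff_dvd S)

/-- The quotient of the saturation of `N` by `N` in terms of a Smith normal form of `N`. -/
noncomputable def saturationQuotientEquivPiQuotientSpan :
    (saturation N ⧸ N.submoduleOf (saturation N)) ≃ₗ[R] ∀ i, R ⧸ Ideal.span {S.a i} :=
  quotientEquivPiQuotientSpan (saturationCoord S) (saturationCoord_surjective S) S.a _ fun x =>
    (mem_iff_dvd_repr_and_repr_eq_zero S x).trans <|
      and_iff_left <| (mem_saturation_iff_repr_eq_zero S x).mp x.2

theorem finite_saturation_quotient_of_smithNormalForm [Nontrivial R] [Ring.HasFiniteQuotients R]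
    (S : Basis.SmithNormalForm N ι n) :
    Finite (saturation N ⧸ N.submoduleOf (saturation N)) := by
  have finite_factor (i : Fin n) : Finite (R ⧸ Ideal.span {S.a i}) :=
    Ring.HasFiniteQuotients.finiteQuotient <| by
      simpa using nonZeroDivisors.ne_zero (smithNormalForm_diag_mem_nonZeroDivisors S i)
  exact .of_equiv _ (saturationQuotientEquivPiQuotientSpan S).symm.toEquiv

end SmithNormalForm

section PrincipalIdealDomain

variable {R M : Type*} [CommRing R] [IsDomain R] [IsPrincipalIdealRing R] [AddCommGroup M]
  [Module R M] [Module.Free R M] [Module.Finite R M] (N : Submodule R M)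

theorem nonempty_dualCokernel_linearEquiv_saturation_quotient :
    Nonempty ((Dual R N ⧸ LinearMap.range N.subtype.dualMap) ≃ₗ[R]
      saturation N ⧸ N.submoduleOf (saturation N)) := by
  obtain ⟨n, S⟩ := N.smithNormalForm (Free.chooseBasis R M)
  exact ⟨(dualCokernelEquivPiQuotientSpan S).trans (saturationQuotientEquivPiQuotientSpan S).symm⟩

theorem finite_saturation_quotient [Ring.HasFiniteQuotients R] :
    Finite (saturation N ⧸ N.submoduleOf (saturation N)) :=
  finite_saturation_quotient_of_smithNormalForm (N.smithNormalForm (Free.chooseBasis R M)).2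

theorem stmt_2_general [Ring.HasFiniteQuotients R] :
    Finite (Dual R N ⧸ LinearMap.range N.subtype.dualMap) ∧
      Nat.card (Dual R N ⧸ LinearMap.range N.subtype.dualMap) =
        (N.toAddSubgroup.addSubgroupOf (saturation N).toAddSubgroup).index := by
  obtain ⟨e⟩ := nonempty_dualCokernel_linearEquiv_saturation_quotient N
  have := finite_saturation_quotient N
  exact ⟨.of_equiv _ e.symm.toEquiv, Nat.card_congr e.toEquiv⟩

end PrincipalIdealDomain

section Integers

variable {n : ℕ} (H : AddSubgroup (Fin n → ℤ))

theorem saturation_toIntSubmodule_toAddSubgroup :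
    (saturation H.toIntSubmodule).toAddSubgroup = saturationSubgroup n H := by
  ext x
  change x ∈ saturation H.toIntSubmodule ↔ ∃ q : ℕ, 0 < q ∧ q • x ∈ H
  rw [mem_saturation_iff]
  constructor
  · rintro ⟨r, hr, hrx⟩
    refine ⟨r.natAbs, Int.natAbs_pos.mpr (nonZeroDivisors.ne_zero hr), ?_⟩
    rw [← natCast_zsmul, ← Int.sign_mul_self_eq_natAbs, mul_smul]
    exact H.zsmul_mem hrx _
  · rintro ⟨q, hq, hqx⟩
    refine ⟨q, by simpa using hq.ne', ?_⟩
    rwa [natCast_zsmul]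

/-- The cokernel of `resHom` is that of the restriction of `ℤ`-linear forms. -/
def cokernelResHomEquivDualCokernel :
    ((H →+ ℤ) ⧸ (resHom n H).range) ≃+
      Dual ℤ H.toIntSubmodule ⧸ LinearMap.range H.toIntSubmodule.subtype.dualMap :=
  QuotientAddGroup.congr _ (LinearMap.range H.toIntSubmodule.subtype.dualMap).toAddSubgroup
    (addMonoidHomLequivInt ℤ).toAddEquiv <| by
      ext g
      constructor
      · rintro ⟨_, ⟨φ, rfl⟩, rfl⟩
        exact ⟨φ.toIntLinearMap, rfl⟩
      · rintro ⟨φ, rfl⟩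
        exact ⟨_, ⟨φ.toAddMonoidHom, rfl⟩, rfl⟩

end Integers

/-- The cokernel of the restriction map `Hom(ℤⁿ, ℤ) → Hom(H, ℤ)` is finite, of cardinality
equal to the index of `H` in its saturation. -/
theorem stmt_2 (n : ℕ) (H : AddSubgroup (Fin n → ℤ)) :
    Finite ((↥H →+ ℤ) ⧸ (resHom n H).range) ∧
      Nat.card ((↥H →+ ℤ) ⧸ (resHom n H).range) =
        (H.addSubgroupOf (saturationSubgroup n H)).index := by
  obtain ⟨finite_cokernel, card_cokernel⟩ := stmt_2_general H.toIntSubmodule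
  have e := (cokernelResHomEquivDualCokernel H).toEquiv
  rw [← saturation_toIntSubmodule_toAddSubgroup]
  exact ⟨.of_equiv _ e.symm, (Nat.card_congr e).trans card_cokernel⟩
end

section
/- Let k be a field, let R := AddMonoidAlgebra k (ℤ × ℤ) be the Laurent polynomial ring in two variables over k, let B and W be finite types, and let f : (B → R) →ₗ[R] (W → R) be an injective R-linear map between the corresponding finite free R-modules. Then the cokernel module (W → R) / range(f) has no nonzero R-submodule of finite length; that is, every R-submodule of the cokernel which has finite length as an R-module is the zero submodule. (In the paper's language: the spectral transform is a pure sheaf of dimension one on the two-dimensional torus, having no subsheaves with zero-dimensional support.) -/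
/-!
The ring `k[ℤ × ℤ] ≅ k[T;T⁻¹][T;T⁻¹]` has depth at least two at every maximal ideal: over a
Jacobson ring `A`, a maximal ideal `m` of `A[T;T⁻¹]` lies over a maximal ideal of `A` and contains a
monic polynomial `g`, both by Zariski's lemma; as `A[X] ⧸ (g)` is free over `A`, putting `g` in
front of a regular sequence in `m ∩ A` gives a longer one in `m`.

A nonzero submodule of finite length in the cokernel of `f : F → G` would contain a nonzero class
`[w]` killed by a maximal ideal, hence by some regular sequence `a, b`. Writing `a w = f u` and
`b w = f v`, injectivity of `f` gives `b u = a v`, so regularity on `F` gives `u = a u₀`, and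
cancelling `a` in `G` gives `w = f u₀`.
-/

open Polynomial LaurentPolynomial RingTheory.Sequence
open scoped Pointwise

section RegularSequences

variable {A : Type*} [CommRing A] {rs : List A}

lemma isWeaklyRegular_of_flat_module (M : Type*) [AddCommGroup M] [Module A M] [Module.Flat A M]
    (hrs : IsWeaklyRegular A rs) : IsWeaklyRegular M rs :=
  ((TensorProduct.rid A M).isWeaklyRegular_congr rs).1 hrs.isWeaklyRegular_lTensor

lemma flat_quotSMulTop_of_monic {g : A[X]} (hg : g.Monic) :
    Module.Flat A (QuotSMulTop g A[X]) := by
  have : Module.Free A (A[X] ⧸ Ideal.span {g}) := hg.free_quotient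
  have hspan : Ideal.span {g} = g • (⊤ : Submodule A[X] A[X]) := by
    rw [← Submodule.ideal_span_singleton_smul, smul_eq_mul, Ideal.mul_top]
  exact .of_linearEquiv ((Submodule.quotEquivOfEq _ _ hspan).restrictScalars A).symm

lemma isWeaklyRegular_monic_cons_map_C {g : A[X]} (hg : g.Monic) (hrs : IsWeaklyRegular A rs) :
    IsWeaklyRegular A[X] (g :: rs.map Polynomial.C) := by
  have := flat_quotSMulTop_of_monic hg
  exact .cons hg.isRegular.left <|
    (isWeaklyRegular_map_algebraMap_iff A[X] _ rs).2 (isWeaklyRegular_of_flat_module _ hrs)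

lemma isWeaklyRegular_toLaurent_monic_cons_map_C {g : A[X]} (hg : g.Monic)
    (hrs : IsWeaklyRegular A rs) :
    IsWeaklyRegular A[T;T⁻¹] (g.toLaurent :: rs.map LaurentPolynomial.C) := by
  have h := (isWeaklyRegular_monic_cons_map_C hg hrs).of_isLocalization A[T;T⁻¹]
    (Submonoid.powers (X : A[X]))
  simpa [Function.comp_def, algebraMap_eq_toLaurent] using h

end RegularSequences

section JacobsonRings

variable {A S : Type*} [CommRing A] [IsJacobsonRing A] [CommRing S] [Algebra A S]
  [Algebra.FiniteType A S]

lemma finite_quotient_of_isMaximal (m : Ideal S) [m.IsMaximal] : Module.Finite A (S ⧸ m) :=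
  let := Ideal.Quotient.field m
  finite_of_finite_type_of_isJacobsonRing A (S ⧸ m)

lemma isMaximal_comap_algebraMap_of_finiteType (m : Ideal S) [m.IsMaximal] :
    (m.comap (algebraMap A S)).IsMaximal := by
  let := Ideal.Quotient.field m
  have := finite_quotient_of_isMaximal (A := A) m
  have h := Ideal.isMaximal_comap_of_isIntegral_of_isMaximal (R := A) (⊥ : Ideal (S ⧸ m))
  rwa [IsScalarTower.algebraMap_eq A S (S ⧸ m), ← Ideal.comap_comap, Ideal.Quotient.algebraMap_eq,
    ← RingHom.ker_eq_comap_bot, Ideal.mk_ker] at h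

lemma exists_monic_aeval_mem_of_isMaximal (m : Ideal S) [m.IsMaximal] (z : S) :
    ∃ p : A[X], p.Monic ∧ aeval z p ∈ m := by
  have := finite_quotient_of_isMaximal (A := A) m
  obtain ⟨p, hp, hpz⟩ := Algebra.IsIntegral.isIntegral (R := A) (Ideal.Quotient.mkₐ A m z)
  rw [← aeval_def, aeval_algHom_apply] at hpz
  exact ⟨p, hp, Ideal.Quotient.eq_zero_iff_mem.1 hpz⟩

end JacobsonRings

/-- `R` has depth at least `n` at each of its maximal ideals, witnessed by sequences of elements of
`R`. Weak regularity suffices: a weakly regular sequence inside a proper ideal is regular. -/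
def DepthGEAtMaximals (R : Type*) [CommRing R] (n : ℕ) : Prop :=
  ∀ m : Ideal R, m.IsMaximal → ∃ rs : List R,
    rs.length = n ∧ IsWeaklyRegular R rs ∧ ∀ r ∈ rs, r ∈ m

namespace DepthGEAtMaximals

lemma zero (R : Type*) [CommRing R] : DepthGEAtMaximals R 0 :=
  fun _ _ ↦ ⟨[], rfl, .nil R R, by simp⟩

lemma of_ringEquiv {R S : Type*} [CommRing R] [CommRing S] (e : R ≃+* S) {n : ℕ}
    (h : DepthGEAtMaximals R n) : DepthGEAtMaximals S n := by
  intro m hm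
  obtain ⟨rs, hlen, hreg, hmem⟩ := h (m.comap e) (Ideal.comap_isMaximal_of_equiv e)
  refine ⟨rs.map e, by simpa using hlen, ?_, by simpa using hmem⟩
  exact (e.toAddEquiv.isWeaklyRegular_congr <| List.forall₂_map_right_iff.2 <|
    List.forall₂_same.2 fun r _ x ↦ map_mul e r x).1 hreg

lemma laurentPolynomial {A : Type*} [CommRing A] [IsJacobsonRing A] {n : ℕ}
    (h : DepthGEAtMaximals A n) : DepthGEAtMaximals A[T;T⁻¹] (n + 1) := by
  intro m hm
  obtain ⟨rs, hlen, hreg, hmem⟩ := h _ (isMaximal_comap_algebraMap_of_finiteType m)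
  obtain ⟨g, hg, hgm⟩ := exists_monic_aeval_mem_of_isMaximal (A := A) m (T 1)
  have hgT : aeval (T 1) g = g.toLaurent := by
    rw [← toLaurent_X, ← toLaurentAlg_apply, aeval_algHom_apply, aeval_X_left_apply,
      toLaurentAlg_apply]
  refine ⟨_, by simpa using hlen, isWeaklyRegular_toLaurent_monic_cons_map_C hg hreg, ?_⟩
  simpa [← hgT] using ⟨hgm, hmem⟩

lemma addMonoidAlgebra_int_prod_int (k : Type*) [CommRing k] [IsJacobsonRing k] :
    DepthGEAtMaximals (AddMonoidAlgebra k (ℤ × ℤ)) 2 :=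
  have : IsJacobsonRing k[T;T⁻¹] := isJacobsonRing_of_finiteType (A := k)
  (zero k).laurentPolynomial.laurentPolynomial.of_ringEquiv AddMonoidAlgebra.curryRingEquiv.symm

end DepthGEAtMaximals

lemma exists_ne_zero_isMaximal_torsionOf (R M : Type*) [CommRing R] [AddCommGroup M] [Module R M]
    [IsArtinian R M] [Nontrivial M] : ∃ x : M, x ≠ 0 ∧ (Ideal.torsionOf R M x).IsMaximal := by
  obtain ⟨S, hS⟩ := IsAtomic.exists_atom (Submodule R M)
  have : IsSimpleModule R S := isSimpleModule_iff_isAtom.2 hS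
  have := IsSimpleModule.nontrivial R S
  obtain ⟨s, hs⟩ := exists_ne (0 : S)
  refine ⟨s, by simpa using hs, ?_⟩
  convert! IsSimpleModule.ker_toSpanSingleton_isMaximal R hs using 1
  ext r
  simp [Subtype.ext_iff]

section Cokernels

variable {R F G : Type*} [CommRing R] [AddCommGroup F] [Module R F] [AddCommGroup G] [Module R G]

lemma eq_zero_of_smul_eq_zero_of_isWeaklyRegular_pair {f : F →ₗ[R] G} (hf : Function.Injective f)
    {a b : R} (hF : IsWeaklyRegular F [a, b]) (hG : IsSMulRegular G a)
    {x : G ⧸ LinearMap.range f} (hax : a • x = 0) (hbx : b • x = 0) : x = 0 := by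
  obtain ⟨w, rfl⟩ := Submodule.Quotient.mk_surjective _ x
  rw [← Submodule.Quotient.mk_smul, Submodule.Quotient.mk_eq_zero] at hax hbx
  obtain ⟨u, hu⟩ := hax
  obtain ⟨v, hv⟩ := hbx
  have huv : b • u = a • v := hf <| by rw [map_smul, map_smul, hu, hv, smul_comm]
  have hu_mem : u ∈ a • (⊤ : Submodule R F) := by
    have hb : IsSMulRegular (QuotSMulTop a F) b :=
      (isWeaklyRegular_singleton_iff ..).1 ((isWeaklyRegular_cons_iff ..).1 hF).2
    refine (isSMulRegular_quotient_iff_mem_of_smul_mem _ _).1 hb u ?_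
    exact huv ▸ Submodule.smul_mem_pointwise_smul v a ⊤ trivial
  obtain ⟨u₀, -, rfl⟩ := Submodule.mem_smul_pointwise_iff_exists .. |>.1 hu_mem
  rw [map_smul] at hu
  exact (Submodule.Quotient.mk_eq_zero _).2 ⟨u₀, hG hu⟩

theorem eq_bot_of_isArtinian_of_depthGEAtMaximals_two (hR : DepthGEAtMaximals R 2)
    [Module.Flat R F] [Module.IsTorsionFree R G] {f : F →ₗ[R] G} (hf : Function.Injective f)
    (N : Submodule R (G ⧸ LinearMap.range f)) [IsArtinian R N] : N = ⊥ := by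
  by_contra hN
  have := Submodule.nontrivial_iff_ne_bot.2 hN
  obtain ⟨x, hx, hmax⟩ := exists_ne_zero_isMaximal_torsionOf R N
  obtain ⟨rs, hlen, hreg, hmem⟩ := hR _ hmax
  obtain ⟨a, b, rfl⟩ := List.length_eq_two.1 hlen
  have ha : IsLeftRegular a := ((isWeaklyRegular_cons_iff ..).1 hreg).1
  have hG : IsSMulRegular G a := (isLeftRegular_iff_isRegular.1 ha).isSMulRegular
  have hker : ∀ r ∈ [a, b], r • (x : G ⧸ LinearMap.range f) = 0 := fun r hr ↦ by
    simpa using congrArg Subtype.val (hmem r hr)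
  exact hx <| Subtype.ext <| eq_zero_of_smul_eq_zero_of_isWeaklyRegular_pair hf
    (isWeaklyRegular_of_flat_module F hreg) hG (hker a (by simp)) (hker b (by simp))

end Cokernels

theorem stmt_3_general {k F G : Type*} [CommRing k] [IsJacobsonRing k]
    [AddCommGroup F] [Module (AddMonoidAlgebra k (ℤ × ℤ)) F]
    [Module.Flat (AddMonoidAlgebra k (ℤ × ℤ)) F]
    [AddCommGroup G] [Module (AddMonoidAlgebra k (ℤ × ℤ)) G]
    [Module.IsTorsionFree (AddMonoidAlgebra k (ℤ × ℤ)) G]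
    {f : F →ₗ[AddMonoidAlgebra k (ℤ × ℤ)] G} (hf : Function.Injective f)
    (N : Submodule (AddMonoidAlgebra k (ℤ × ℤ)) (G ⧸ LinearMap.range f))
    [IsArtinian (AddMonoidAlgebra k (ℤ × ℤ)) N] : N = ⊥ :=
  eq_bot_of_isArtinian_of_depthGEAtMaximals_two
    (DepthGEAtMaximals.addMonoidAlgebra_int_prod_int k) hf N

/-- The cokernel of an injective map of finite free modules over the two-variable Laurent
polynomial ring `k[ℤ × ℤ]` has no nonzero submodule of finite length: the spectral transform
is a pure sheaf of dimension one. -/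
theorem stmt_3 (k : Type) [Field k] (B W : Type) [Fintype B] [Fintype W]
    (f : (B → AddMonoidAlgebra k (ℤ × ℤ)) →ₗ[AddMonoidAlgebra k (ℤ × ℤ)]
         (W → AddMonoidAlgebra k (ℤ × ℤ)))
    (hf : Function.Injective f)
    (N : Submodule (AddMonoidAlgebra k (ℤ × ℤ))
          ((W → AddMonoidAlgebra k (ℤ × ℤ)) ⧸ LinearMap.range f))
    (hN : IsFiniteLength (AddMonoidAlgebra k (ℤ × ℤ)) N) :
    N = ⊥ := by
  have := (isFiniteLength_iff_isNoetherian_isArtinian.1 hN).2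
  exact stmt_3_general hf N
end

section
/- Let R be a commutative ring, n a finite type, and K : Matrix n n R a square matrix, inducing the R-linear map K.mulVecLin : (n → R) →ₗ[R] (n → R). Then for every prime ideal p of R, the localization of the cokernel module (n → R) / range(K.mulVecLin) at p is nonzero if and only if det K ∈ p. Equivalently, the support of the cokernel module equals the zero locus of the determinant: Module.support R ((n → R) / range(K.mulVecLin)) = { p ∈ Spec R | det K ∈ p }. (This expresses that the spectral transform is supported on the spectral curve, the vanishing locus of det K.) -/
/-!
By Cramer's rule `K * adjugate K = det K • 1`, so `det K` annihilates the cokernel of `K`.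
Conversely, if `r` annihilates the cokernel, then `r • 1` factors as `K * B`, and taking
determinants shows that `det K` divides a power of `r`. Hence the annihilator of the cokernel and
the ideal `(det K)` have the same radical. The cokernel is finitely generated, so its support is
the zero locus of its annihilator, which depends only on that radical.
-/

section Cokernel

open Matrix

variable {R n : Type*} [CommRing R] [Fintype n]

theorem mem_annihilator_quotient_range_mulVecLin_iff {m : Type*} [Finite m] [DecidableEq m]
    {K : Matrix m n R} {r : R} :
    r ∈ Module.annihilator R ((m → R) ⧸ LinearMap.range K.mulVecLin) ↔
      ∃ B : Matrix n m R, K * B = r • 1 := by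
  cases nonempty_fintype m
  have smul_mem_range : r ∈ Module.annihilator R ((m → R) ⧸ LinearMap.range K.mulVecLin) ↔
      ∀ v : m → R, ∃ w : n → R, K *ᵥ w = r • v := by
    simp only [Module.mem_annihilator, (Submodule.Quotient.mk_surjective _).forall,
      ← Submodule.Quotient.mk_smul, Submodule.Quotient.mk_eq_zero, LinearMap.mem_range,
      mulVecLin_apply]
  rw [smul_mem_range]
  constructor
  · intro h
    choose columns hcolumns using fun j : m ↦ h (Pi.single j 1)
    refine ⟨(of columns)ᵀ, ext_of_mulVec_single fun j ↦ ?_⟩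
    rw [← mulVec_mulVec, mulVec_single_one, smul_mulVec, one_mulVec]
    exact hcolumns j
  · rintro ⟨B, hB⟩ v
    exact ⟨B *ᵥ v, by rw [mulVec_mulVec, hB, smul_mulVec, one_mulVec]⟩

variable [DecidableEq n]

theorem det_mem_annihilator_quotient_range_mulVecLin (K : Matrix n n R) :
    K.det ∈ Module.annihilator R ((n → R) ⧸ LinearMap.range K.mulVecLin) :=
  mem_annihilator_quotient_range_mulVecLin_iff.mpr ⟨K.adjugate, K.mul_adjugate⟩

theorem det_dvd_pow_card_of_mul_eq_smul_one {K B : Matrix n n R} {r : R} (h : K * B = r • 1) :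
    K.det ∣ r ^ Fintype.card n :=
  ⟨B.det, by rw [← det_mul, h, det_smul, det_one, mul_one]⟩

theorem radical_annihilator_quotient_range_mulVecLin (K : Matrix n n R) :
    (Module.annihilator R ((n → R) ⧸ LinearMap.range K.mulVecLin)).radical =
      (Ideal.span {K.det}).radical := by
  apply le_antisymm
  · rw [Ideal.radical_le_radical_iff]
    intro r hr
    obtain ⟨B, hB⟩ := mem_annihilator_quotient_range_mulVecLin_iff.mp hr
    exact ⟨Fintype.card n,
      Ideal.mem_span_singleton.mpr (det_dvd_pow_card_of_mul_eq_smul_one hB)⟩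
  · apply Ideal.radical_mono
    rw [Ideal.span_singleton_le_iff_mem]
    exact det_mem_annihilator_quotient_range_mulVecLin K

theorem support_quotient_range_mulVecLin (K : Matrix n n R) :
    Module.support R ((n → R) ⧸ LinearMap.range K.mulVecLin) =
      PrimeSpectrum.zeroLocus {K.det} := by
  rw [Module.support_eq_zeroLocus, ← PrimeSpectrum.zeroLocus_radical,
    radical_annihilator_quotient_range_mulVecLin, PrimeSpectrum.zeroLocus_radical,
    PrimeSpectrum.zeroLocus_span]

end Cokernel

/-- The support of the cokernel of a square matrix `K` equals the vanishing locus of `det K`: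
the spectral transform is supported on the spectral curve. -/
theorem stmt_4 (R : Type) [CommRing R] (n : Type) [Fintype n] [DecidableEq n]
    (K : Matrix n n R) :
    (∀ p : PrimeSpectrum R,
        Nontrivial (LocalizedModule p.asIdeal.primeCompl
          ((n → R) ⧸ LinearMap.range K.mulVecLin)) ↔ K.det ∈ p.asIdeal) ∧
      Module.support R ((n → R) ⧸ LinearMap.range K.mulVecLin) =
        {p : PrimeSpectrum R | K.det ∈ p.asIdeal} := by
  have support_eq : Module.support R ((n → R) ⧸ LinearMap.range K.mulVecLin) =
      {p : PrimeSpectrum R | K.det ∈ p.asIdeal} := by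
    ext p
    rw [support_quotient_range_mulVecLin, PrimeSpectrum.mem_zeroLocus, Set.singleton_subset_iff]
    rfl
  exact ⟨fun p ↦ Module.mem_support_iff.symm.trans (Set.ext_iff.mp support_eq p), support_eq⟩
end

section
/- Let k be a field and R := AddMonoidAlgebra k (ℤ × ℤ) the Laurent polynomial ring in two variables over k, with monomial X^m denoting the element single m 1 for m ∈ ℤ × ℤ. Fix a bipartite weighting datum: finite types B, W, E, endpoint maps β : E → B and ω : E → W, edge weights ℓ : E → kˣ, Kasteleyn signs κ : E → kˣ, and exponents d : E → ℤ × ℤ. Let K(d) : Matrix W B R be the Kasteleyn matrix with entries K(d) w b = Σ over edges e with β e = b and ω e = w of (ℓ e * κ e : k) • X^(d e). Suppose h_B : B → ℤ × ℤ and h_W : W → ℤ × ℤ are arbitrary and d' : E → ℤ × ℤ is defined by d' e = d e + h_W(ω e) − h_B(β e). Then the cokernels of the induced linear maps (B → R) →ₗ[R] (W → R) of K(d') and K(d) are isomorphic as R-modules. (Changing the curves γ_x, γ_y within their homology classes changes the exponents by such a coboundary, so the spectral transform is independent of the choice of γ_x and γ_y.) -/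
/-- The Kasteleyn matrix of a bipartite weighting datum: its `(w, b)` entry is the sum over
edges `e` with black endpoint `b` and white endpoint `w` of `(ℓ e * κ e) • X^(d e)` in the
Laurent polynomial ring `R = k[ℤ × ℤ]`. -/
noncomputable def kasteleyn {k : Type} [Field k] {B W E : Type} [Fintype E]
    [DecidableEq B] [DecidableEq W]
    (β : E → B) (ω : E → W) (ℓ κ : E → kˣ) (d : E → ℤ × ℤ) :
    Matrix W B (AddMonoidAlgebra k (ℤ × ℤ)) :=
  fun w b => ∑ e ∈ Finset.univ.filter fun e => β e = b ∧ ω e = w,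
    ((ℓ e * κ e : kˣ) : k) • AddMonoidAlgebra.single (d e) (1 : k)

/-!
Shifting the exponents by the coboundary of `(hB, hW)` multiplies the `(w, b)` entry by
`X^(hW w - hB b)`, so the new matrix arises from the old one by rescaling rows and columns by
monomials. Monomials are units, so the row rescaling is an automorphism of the target carrying
one range onto the other, and it descends to the cokernels.
-/

section Cokernel

variable {R m n : Type*}

section CommSemiring

variable [CommSemiring R]

/-- The automorphism of the free module `m → R` multiplying the `i`-th coordinate by the unit
`u i`, i.e. the action of an invertible diagonal matrix; `m` may be infinite. -/
def diagonalUnitsEquiv (u : m → Rˣ) : (m → R) ≃ₗ[R] (m → R) :=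
  LinearEquiv.piCongrRight fun i => LinearEquiv.smulOfUnit (u i)

theorem diagonalUnitsEquiv_apply (u : m → Rˣ) (x : m → R) (i : m) :
    diagonalUnitsEquiv u x i = u i * x i :=
  rfl

variable [Fintype n] {A A' : Matrix m n R} {u : m → Rˣ} {v : n → Rˣ}

theorem diagonalUnitsEquiv_comp_mulVecLin (h : ∀ i j, u i * A i j = A' i j * v j) :
    (diagonalUnitsEquiv u).toLinearMap ∘ₗ A.mulVecLin =
      A'.mulVecLin ∘ₗ (diagonalUnitsEquiv v).toLinearMap := by
  ext1 x
  funext i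
  simp only [LinearMap.comp_apply, LinearEquiv.coe_coe, Matrix.mulVecLin_apply,
    diagonalUnitsEquiv_apply, Matrix.mulVec, dotProduct]
  calc u i * ∑ j, A i j * x j = ∑ j, u i * A i j * x j := by simp only [Finset.mul_sum, mul_assoc]
    _ = ∑ j, A' i j * (v j * x j) := by simp only [h, mul_assoc]

theorem map_range_mulVecLin_diagonalUnitsEquiv (h : ∀ i j, u i * A i j = A' i j * v j) :
    (LinearMap.range A.mulVecLin).map (diagonalUnitsEquiv u).toLinearMap =
      LinearMap.range A'.mulVecLin := by
  rw [← LinearMap.range_comp, diagonalUnitsEquiv_comp_mulVecLin h, LinearEquiv.range_comp]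

end CommSemiring

/-- The isomorphism of cokernels induced by rescaling the rows of `A` by `u` and its columns
by `v⁻¹`. -/
def cokernelEquivOfDiagonalUnits [CommRing R] [Fintype n] {A A' : Matrix m n R}
    {u : m → Rˣ} {v : n → Rˣ} (h : ∀ i j, u i * A i j = A' i j * v j) :
    ((m → R) ⧸ LinearMap.range A.mulVecLin) ≃ₗ[R] ((m → R) ⧸ LinearMap.range A'.mulVecLin) :=
  Submodule.Quotient.equiv _ _ (diagonalUnitsEquiv u) (map_range_mulVecLin_diagonalUnitsEquiv h)

end Cokernel

section BipartiteMatrix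

/-- The monomial `X^g` as a unit of the group algebra `k[G]`. -/
noncomputable def monomialUnit (k : Type*) {G : Type*} [Semiring k] [AddGroup G] (g : G) :
    (AddMonoidAlgebra k G)ˣ :=
  Units.map (AddMonoidAlgebra.of k G) (toUnits (Multiplicative.ofAdd g))

theorem coe_monomialUnit {k G : Type*} [Semiring k] [AddGroup G] (g : G) :
    (monomialUnit k g : AddMonoidAlgebra k G) = AddMonoidAlgebra.single g 1 :=
  rfl

variable {k G B W E : Type*} [Fintype E] [DecidableEq B] [DecidableEq W]

/-- The weighted biadjacency matrix of a bipartite multigraph whose edge `e` carries the weight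
`c e • X^(d e)` in `k[G]`. The Kasteleyn matrix is the case `c = ℓ * κ`, `G = ℤ × ℤ`. -/
noncomputable def bipartiteMatrix [Semiring k] (β : E → B) (ω : E → W) (c : E → k) (d : E → G) :
    Matrix W B (AddMonoidAlgebra k G) :=
  fun w b => ∑ e with β e = b ∧ ω e = w, c e • AddMonoidAlgebra.single (d e) (1 : k)

theorem monomialUnit_mul_bipartiteMatrix [CommSemiring k] [AddCommGroup G]
    (β : E → B) (ω : E → W) (c : E → k) (d : E → G) (hB : B → G) (hW : W → G) (w : W) (b : B) :
    monomialUnit k (hW w) * bipartiteMatrix β ω c d w b =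
      bipartiteMatrix β ω c (fun e => d e + hW (ω e) - hB (β e)) w b * monomialUnit k (hB b) := by
  simp only [bipartiteMatrix, coe_monomialUnit, Finset.mul_sum, Finset.sum_mul]
  refine Finset.sum_congr rfl fun e he => ?_
  obtain ⟨rfl, rfl⟩ := (Finset.mem_filter.mp he).2
  have exponents_eq : hW (ω e) + d e = d e + hW (ω e) - hB (β e) + hB (β e) := by abel
  rw [mul_smul_comm, smul_mul_assoc, AddMonoidAlgebra.single_mul_single,
    AddMonoidAlgebra.single_mul_single, exponents_eq]

theorem stmt_6_general [CommRing k] [AddCommGroup G] [Fintype B]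
    (β : E → B) (ω : E → W) (c : E → k) (d : E → G) (hB : B → G) (hW : W → G) :
    Nonempty (
      ((W → AddMonoidAlgebra k G) ⧸
        LinearMap.range
          (bipartiteMatrix β ω c (fun e => d e + hW (ω e) - hB (β e))).mulVecLin)
      ≃ₗ[AddMonoidAlgebra k G]
      ((W → AddMonoidAlgebra k G) ⧸
        LinearMap.range (bipartiteMatrix β ω c d).mulVecLin)) :=
  ⟨(cokernelEquivOfDiagonalUnits (monomialUnit_mul_bipartiteMatrix β ω c d hB hW)).symm⟩

end BipartiteMatrix

/-- The spectral transform (cokernel of the Kasteleyn operator) is unchanged, up to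
isomorphism of `R`-modules, by changing the exponents `d` by a coboundary (i.e. moving the
curves `γ_x`, `γ_y` within their homology classes). -/
theorem stmt_6 (k : Type) [Field k] (B W E : Type)
    [Fintype B] [Fintype W] [Fintype E] [DecidableEq B] [DecidableEq W]
    (β : E → B) (ω : E → W) (ℓ κ : E → kˣ) (d : E → ℤ × ℤ)
    (hB : B → ℤ × ℤ) (hW : W → ℤ × ℤ) :
    Nonempty (
      ((W → AddMonoidAlgebra k (ℤ × ℤ)) ⧸
        LinearMap.range
          (kasteleyn β ω ℓ κ (fun e => d e + hW (ω e) - hB (β e))).mulVecLin)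
      ≃ₗ[AddMonoidAlgebra k (ℤ × ℤ)]
      ((W → AddMonoidAlgebra k (ℤ × ℤ)) ⧸
        LinearMap.range (kasteleyn β ω ℓ κ d).mulVecLin)) :=
  stmt_6_general β ω (fun e => ((ℓ e * κ e : kˣ) : k)) d hB hW
end

section
/- Let k be a field and R := AddMonoidAlgebra k (ℤ × ℤ) the Laurent polynomial ring in two variables over k, with monomial X^m denoting the element single m 1 for m ∈ ℤ × ℤ. Fix a bipartite weighting datum on a common finite index type: B = W = Fin n, a finite edge type E, endpoint maps β : E → Fin n and ω : E → Fin n, edge weights ℓ : E → kˣ, Kasteleyn signs κ : E → kˣ, and exponents d : E → ℤ × ℤ, and let K(ℓ, d) : Matrix (Fin n) (Fin n) R be the Kasteleyn matrix with entries K w b = Σ over edges e with β e = b and ω e = w of (ℓ e * κ e : k) • X^(d e). Given gauge data g_B, g_W : Fin n → kˣ and coboundary data h_B, h_W : Fin n → ℤ × ℤ, set ℓ' e = g_W(ω e) * ℓ e * (g_B(β e))⁻¹ and d' e = d e + h_W(ω e) − h_B(β e). Then det K(ℓ', d') = c • X^m * det K(ℓ, d), where c = (∏_w g_W w) * (∏_b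 g_B b)⁻¹ ∈ kˣ and m = (Σ_w h_W w) − (Σ_b h_B b) ∈ ℤ × ℤ. In particular the determinant of the Kasteleyn matrix is well defined up to multiplication by a unit of R, so the spectral curve { det K = 0 } and the Goncharov–Kenyon Hamiltonians (the coefficients of det K) are well defined up to an overall unit. -/
/-!
The gauge factors at the endpoints of an edge depend only on the entry of the Kasteleyn matrix to
which the edge contributes. Hence the transformed matrix is `D_W * K * D_B`, where `D_W` and `D_B`
are diagonal with the monomials `g_W w • X^(h_W w)` and `(g_B b)⁻¹ • X^(-h_B b)` on the diagonal,
and the claimed unit is `det D_W * det D_B`.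
-/

theorem prod_single_mul_prod_single_neg_inv {ι ι' R M : Type*} [CommSemiring R] [AddCommGroup M]
    (s : Finset ι) (t : Finset ι') (u : ι → Rˣ) (v : ι' → Rˣ) (a : ι → M) (b : ι' → M) :
    (∏ i ∈ s, AddMonoidAlgebra.single (a i) (u i : R)) *
        ∏ j ∈ t, AddMonoidAlgebra.single (-b j) (((v j)⁻¹ : Rˣ) : R) =
      (((∏ i ∈ s, u i) * (∏ j ∈ t, v j)⁻¹ : Rˣ) : R) •
        AddMonoidAlgebra.single ((∑ i ∈ s, a i) - ∑ j ∈ t, b j) (1 : R) := by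
  rw [AddMonoidAlgebra.prod_single, AddMonoidAlgebra.prod_single,
    AddMonoidAlgebra.single_mul_single, AddMonoidAlgebra.smul_single, smul_eq_mul, mul_one,
    Finset.sum_neg_distrib, ← sub_eq_add_neg, ← Units.coe_prod, ← Units.coe_prod,
    ← Units.val_mul, Finset.prod_inv_distrib]

section Gauge

variable {k : Type} [Field k] {B W E : Type} [Fintype E] [DecidableEq B] [DecidableEq W]
  (β : E → B) (ω : E → W) (ℓ κ : E → kˣ) (d : E → ℤ × ℤ)
  (gB : B → kˣ) (gW : W → kˣ) (hB : B → ℤ × ℤ) (hW : W → ℤ × ℤ)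

theorem kasteleyn_gauge_apply (w : W) (b : B) :
    kasteleyn β ω (fun e => gW (ω e) * ℓ e * (gB (β e))⁻¹) κ
        (fun e => d e + hW (ω e) - hB (β e)) w b =
      AddMonoidAlgebra.single (hW w) (gW w : k) * kasteleyn β ω ℓ κ d w b *
        AddMonoidAlgebra.single (-hB b) (((gB b)⁻¹ : kˣ) : k) := by
  simp only [kasteleyn, Finset.mul_sum, Finset.sum_mul]
  refine Finset.sum_congr rfl fun e he => ?_
  obtain ⟨rfl, rfl⟩ := (Finset.mem_filter.mp he).2
  simp only [AddMonoidAlgebra.smul_single, AddMonoidAlgebra.single_mul_single, smul_eq_mul,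
    mul_one, Units.val_mul]
  congr 1
  · abel
  · ring

theorem kasteleyn_gauge_eq_diagonal_mul_mul_diagonal [Fintype B] [Fintype W] :
    kasteleyn β ω (fun e => gW (ω e) * ℓ e * (gB (β e))⁻¹) κ
        (fun e => d e + hW (ω e) - hB (β e)) =
      Matrix.diagonal (fun w => AddMonoidAlgebra.single (hW w) (gW w : k)) *
        kasteleyn β ω ℓ κ d *
        Matrix.diagonal (fun b => AddMonoidAlgebra.single (-hB b) (((gB b)⁻¹ : kˣ) : k)) := by
  ext1 w b
  rw [Matrix.mul_diagonal, Matrix.diagonal_mul, kasteleyn_gauge_apply]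

end Gauge

theorem stmt_7_general {k : Type} [Field k] {V E : Type} [Fintype V] [DecidableEq V] [Fintype E]
    (β ω : E → V) (ℓ κ : E → kˣ) (d : E → ℤ × ℤ)
    (gB gW : V → kˣ) (hB hW : V → ℤ × ℤ) :
    (kasteleyn β ω (fun e => gW (ω e) * ℓ e * (gB (β e))⁻¹) κ
        (fun e => d e + hW (ω e) - hB (β e))).det
      = (((∏ w, gW w) * (∏ b, gB b)⁻¹ : kˣ) : k) •
          AddMonoidAlgebra.single ((∑ w, hW w) - (∑ b, hB b)) (1 : k) *
        (kasteleyn β ω ℓ κ d).det := by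
  rw [kasteleyn_gauge_eq_diagonal_mul_mul_diagonal, Matrix.det_mul, Matrix.det_mul,
    Matrix.det_diagonal, Matrix.det_diagonal, mul_right_comm, prod_single_mul_prod_single_neg_inv]

/-- Under a gauge transformation of the weights and a coboundary change of the exponents,
the determinant of the Kasteleyn matrix changes by multiplication by the unit `c • X^m`,
where `c = (∏ w, g_W w) * (∏ b, g_B b)⁻¹` and `m = (∑ w, h_W w) − (∑ b, h_B b)`. -/
theorem stmt_7 (k : Type) [Field k] (n : ℕ) (E : Type) [Fintype E]
    (β ω : E → Fin n) (ℓ κ : E → kˣ) (d : E → ℤ × ℤ)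
    (gB gW : Fin n → kˣ) (hB hW : Fin n → ℤ × ℤ) :
    (kasteleyn β ω (fun e => gW (ω e) * ℓ e * (gB (β e))⁻¹) κ
        (fun e => d e + hW (ω e) - hB (β e))).det
      = (((∏ w, gW w) * (∏ b, gB b)⁻¹ : kˣ) : k) •
          AddMonoidAlgebra.single ((∑ w, hW w) - (∑ b, hB b)) (1 : k) *
        (kasteleyn β ω ℓ κ d).det :=
  stmt_7_general β ω ℓ κ d gB gW hB hW
end

section
/- Let k be a field and R := AddMonoidAlgebra k (ℤ × ℤ) the Laurent polynomial ring in two variables over k, with monomial X^m denoting the element single m 1 for m ∈ ℤ × ℤ. Fix a bipartite weighting datum on a common finite index type: B = W = Fin n, a finite edge type E, endpoint maps β, ω : E → Fin n, edge weights ℓ : E → kˣ, Kasteleyn signs κ : E → kˣ, and exponents d : E → ℤ × ℤ, and let K : Matrix (Fin n) (Fin n) R be the Kasteleyn matrix with entries K w b = Σ over edges e with β e = b and ω e = w of (ℓ e * κ e : k) • X^(d e). Then det K = Σ over all perfect matchings of the weighted products: explicitly, det K equals the sum over all functions μ : Fin n → E satisfying β(μ b) = b for all b and such that b ↦ ω(μ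 b) is a bijection of Fin n, of sign(σ_μ) * (∏_b (ℓ(μ b) * κ(μ b) : k)) • X^(Σ_b d(μ b)), where σ_μ is the permutation of Fin n given by b ↦ ω(μ b). (Thus the coefficients of det K are signed weighted counts of perfect matchings of the bipartite graph, i.e., the summands of the dimer partition function organized by homology class.) -/
/-!
Expanding the determinant over permutations `σ`, and each product of entries over choices `μ` of
an edge at every black vertex, gives a double sum over pairs `(σ, μ)` such that `μ b` joins `b` to
`σ b` for all `b`. Exchanging the sums, `μ` determines `σ` as `b ↦ ω (μ b)`, and such a `σ` exists
exactly when `μ` is a perfect matching.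
-/

theorem sum_equiv_ite_coe_eq {α γ M : Type*} [Fintype α] [DecidableEq α] [Fintype γ]
    [DecidableEq γ] [AddCommMonoid M] (f : α → γ) (g : α ≃ γ → M) :
    ∑ σ : α ≃ γ, (if f = σ then g σ else 0)
      = if hf : f.Bijective then g (Equiv.ofBijective f hf) else 0 := by
  split_ifs with hf
  · have coe_eq_iff (σ : α ≃ γ) : f = σ ↔ Equiv.ofBijective f hf = σ :=
      DFunLike.coe_injective.eq_iff (a := Equiv.ofBijective f hf)
    simp only [coe_eq_iff, Fintype.sum_ite_eq]
  · exact Finset.sum_eq_zero fun σ _ ↦ if_neg fun hσ : f = σ ↦ hf (hσ ▸ σ.bijective)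

section EdgeWeightMatrix

variable {B W E R : Type*} [DecidableEq B] [DecidableEq W] [Fintype E]

/-- The weighted biadjacency matrix of a bipartite multigraph with edges `E`, black endpoints `β`
and white endpoints `ω`: parallel edges add up. The Kasteleyn matrix is the case of monomial
weights `a`. -/
def edgeWeightMatrix [AddCommMonoid R] (β : E → B) (ω : E → W) (a : E → R) : Matrix W B R :=
  .of fun w b ↦ ∑ e with β e = b ∧ ω e = w, a e

theorem prod_edgeWeightMatrix [Fintype B] [CommSemiring R] (β : E → B) (ω : E → W) (a : E → R)
    (f : B → W) :
    ∏ b, edgeWeightMatrix β ω a (f b) b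
      = ∑ μ : B → E with (∀ b, β (μ b) = b) ∧ (fun b ↦ ω (μ b)) = f, ∏ b, a (μ b) := by
  simp only [edgeWeightMatrix, Matrix.of_apply, Finset.prod_univ_sum]
  refine Finset.sum_congr ?_ fun _ _ ↦ rfl
  ext μ
  simp [forall_and, funext_iff]

end EdgeWeightMatrix

theorem kasteleyn_eq_edgeWeightMatrix {k B W E : Type} [Field k] [DecidableEq B] [DecidableEq W]
    [Fintype E] (β : E → B) (ω : E → W) (ℓ κ : E → kˣ) (d : E → ℤ × ℤ) :
    kasteleyn β ω ℓ κ d = edgeWeightMatrix β ω fun e ↦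
      ((ℓ e * κ e : kˣ) : k) • AddMonoidAlgebra.single (d e) (1 : k) :=
  rfl

theorem stmt_10_general {ι E R : Type*} [Fintype ι] [DecidableEq ι] [Fintype E] [CommRing R]
    (β ω : E → ι) (a : E → R) :
    (edgeWeightMatrix β ω a).det
      = ∑ μ : ι → E,
          if h : (∀ b, β (μ b) = b) ∧ Function.Bijective (fun b ↦ ω (μ b)) then
            (Equiv.Perm.sign (Equiv.ofBijective (fun b ↦ ω (μ b)) h.2) : ℤ) • ∏ b, a (μ b)
          else 0 := by
  calc (edgeWeightMatrix β ω a).det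
      = ∑ σ : Equiv.Perm ι, ∑ μ : ι → E,
          if (∀ b, β (μ b) = b) ∧ (fun b ↦ ω (μ b)) = σ then
            (Equiv.Perm.sign σ : ℤ) • ∏ b, a (μ b) else 0 := by
        simp only [Matrix.det_apply, prod_edgeWeightMatrix, Finset.sum_filter, Finset.smul_sum,
          smul_ite, smul_zero, Units.smul_def]
    _ = ∑ μ : ι → E, if ∀ b, β (μ b) = b then
          ∑ σ : Equiv.Perm ι, (if (fun b ↦ ω (μ b)) = σ then
            (Equiv.Perm.sign σ : ℤ) • ∏ b, a (μ b) else 0) else 0 := by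
        rw [Finset.sum_comm]
        simp only [ite_and, Finset.sum_ite_irrel, Finset.sum_const_zero]
    _ = _ := by
        refine Finset.sum_congr rfl fun μ _ ↦ ?_
        by_cases hβ : ∀ b, β (μ b) = b <;>
          simp [hβ, sum_equiv_ite_coe_eq (fun b ↦ ω (μ b))]

/-- The determinant of the Kasteleyn matrix is the signed sum over perfect matchings of the
weighted monomials: the dimer partition function. A perfect matching is a choice
`μ : Fin n → E` of an edge at each black vertex (`β (μ b) = b`) whose white endpoints
`b ↦ ω (μ b)` form a bijection. -/
theorem stmt_10 (k : Type) [Field k] (n : ℕ) (E : Type) [Fintype E]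
    (β ω : E → Fin n) (ℓ κ : E → kˣ) (d : E → ℤ × ℤ) :
    (kasteleyn β ω ℓ κ d).det
      = ∑ μ : Fin n → E,
          if h : (∀ b, β (μ b) = b) ∧ Function.Bijective (fun b => ω (μ b)) then
            (Equiv.Perm.sign (Equiv.ofBijective (fun b => ω (μ b)) h.2) : ℤ) •
              ((∏ b, ((ℓ (μ b) * κ (μ b) : kˣ) : k)) •
                AddMonoidAlgebra.single (∑ b, d (μ b)) (1 : k))
          else 0 := by
  simp only [kasteleyn_eq_edgeWeightMatrix, stmt_10_general, Finset.prod_smul,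
    AddMonoidAlgebra.prod_single, Finset.prod_const_one]
end
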